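/- Let S be a finite set of points in the plane in general position and let u→v be a directed edge of Θ₆(S). If the canonical triangle T(v,u) contains no point of S other than u and v, then u→v is an edge of ΘΘ₆(S). -/

import Mathlib

/-!
For `u ≠ v` the angles of `v - u` and `u - v` differ by an odd multiple of `π`, hence by a whole
number of cone openings `π / 3`, so the bisectors of `C(u,v)` and `C(v,u)` differ by the same angle.
They are therefore opposite, and `‖uv‖ = ‖vu‖`. A Θ₆-edge `w → v` with `w` in the same cone of `v`
as `u` and `‖wv‖ < ‖uv‖` would satisfy `‖vw‖ < ‖vu‖`, placing `w` in the triangle `T(v,u)`.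
-/

open Real

noncomputable section

/-- Counterclockwise angle in `[0, 2π)` from the positive x-axis to the direction of `z`. -/
def argIn (z : ℂ) : ℝ := if 0 ≤ Complex.arg z then Complex.arg z else Complex.arg z + 2 * π

/-- The half-open cone `C_i(u)` with apex `u`: points `p ≠ u` whose direction from `u` has
counterclockwise angle in `[(i-1)π/3, iπ/3)`. -/
def cone (i : ℕ) (u : ℂ) : Set ℂ :=
  {p | p ≠ u ∧ argIn (p - u) ∈ Set.Ico (((i : ℝ) - 1) * (π / 3)) ((i : ℝ) * (π / 3))}

/-- The index `i ∈ {1, …, 6}` of the cone of `u` containing `v`. -/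
def coneIdx (u v : ℂ) : ℕ := (⌊argIn (v - u) / (π / 3)⌋).toNat + 1

/-- The angle of the bisector ray of the cone of `u` containing `v`. -/
def bisAngle (u v : ℂ) : ℝ := ((coneIdx u v : ℝ) - 1) * (π / 3) + π / 6

/-- The projective distance from `u` to `v`: the Euclidean distance from `u` to the
orthogonal projection of `v` onto the bisector ray of the cone of `u` containing `v`. -/
def projDist (u v : ℂ) : ℝ :=
  ((v - u) * Complex.exp (-(Complex.I * (bisAngle u v : ℂ)))).re

/-- `S` is in general position: no two points of `S` lie on a common line parallel to one of
the six rays from the origin at angles `jπ/3`. -/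
def GenPos (S : Finset ℂ) : Prop :=
  ∀ u ∈ S, ∀ v ∈ S, u ≠ v → ∀ j : ℕ, argIn (v - u) ≠ (j : ℝ) * (π / 3)

/-- `S` is in convex position: every point of `S` is an extreme point of the convex hull. -/
def ConvexPos (S : Finset ℂ) : Prop :=
  ∀ p ∈ S, p ∈ Set.extremePoints ℝ (convexHull ℝ (S : Set ℂ))

/-- `u → v` is a directed edge of `Θ₆(S)`: `v` minimizes the projective distance from `u`
among the points of `S` in the cone of `u` containing `v`. -/
def ThetaEdge (S : Finset ℂ) (u v : ℂ) : Prop :=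
  u ∈ S ∧ v ∈ S ∧ v ≠ u ∧
    ∀ w ∈ S, w ∈ cone (coneIdx u v) u → projDist u v ≤ projDist u w

/-- `u → v` is a directed edge of `ΘΘ₆(S)`: it is an edge of `Θ₆(S)` and among all incoming
`Θ₆`-edges `w → v` with `w` in the same cone of `v` as `u`, it minimizes `‖wv‖`. -/
def ThetaThetaEdge (S : Finset ℂ) (u v : ℂ) : Prop :=
  ThetaEdge S u v ∧
    ∀ w, ThetaEdge S w v → coneIdx v w = coneIdx v u → projDist u v ≤ projDist w v

/-- Undirected adjacency in `ΘΘ₆(S)`: paths may use edges in either direction. -/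
def TTAdj (S : Finset ℂ) (u v : ℂ) : Prop := ThetaThetaEdge S u v ∨ ThetaThetaEdge S v u

/-- `p` is a path between `u` and `v` with respect to the adjacency relation `A`. -/
def IsPath (A : ℂ → ℂ → Prop) (u v : ℂ) (p : List ℂ) : Prop :=
  p.Chain' A ∧ p.head? = some u ∧ p.getLast? = some v

/-- The Euclidean length of the polygonal path through the points of `p`. -/
def pathLength (p : List ℂ) : ℝ := (List.zipWith dist p p.tail).sum


/-- The closed canonical triangle `T(a,b)`: the triangle bounded by the two rays from `a`
bounding the cone of `a` containing `b`, and the line through `b` perpendicular to the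
bisector of that cone. -/
def canonTri (a b : ℂ) : Set ℂ :=
  {p | ∃ s t : ℝ, 0 ≤ s ∧ 0 ≤ t ∧
    p = a + (s : ℂ) * Complex.exp (Complex.I * (((((coneIdx a b : ℝ) - 1) * (π / 3)) : ℝ) : ℂ))
          + (t : ℂ) * Complex.exp (Complex.I * ((((coneIdx a b : ℝ) * (π / 3)) : ℝ) : ℂ)) ∧
    ((p - a) * Complex.exp (-(Complex.I * (bisAngle a b : ℂ)))).re ≤ projDist a b}

theorem coe_argIn (z : ℂ) : (argIn z : Angle) = Complex.arg z := by
  unfold argIn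
  split_ifs
  · rfl
  · rw [Angle.coe_add, Angle.coe_two_pi, add_zero]

theorem argIn_nonneg (z : ℂ) : 0 ≤ argIn z := by
  unfold argIn
  split_ifs with h
  · exact h
  · linarith [Complex.neg_pi_lt_arg z, pi_pos]

theorem norm_mul_exp_I_mul_argIn (z : ℂ) :
    (‖z‖ : ℂ) * Complex.exp (Complex.I * (argIn z : ℂ)) = z := by
  have hexp : Complex.exp (argIn z * Complex.I) = Complex.exp (Complex.arg z * Complex.I) := by
    rw [← Circle.coe_exp, ← Circle.coe_exp, ← Angle.toCircle_coe, ← Angle.toCircle_coe, coe_argIn]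
  rw [mul_comm Complex.I, hexp, Complex.norm_mul_exp_arg_mul_I]

theorem exists_argIn_neg_eq {z : ℂ} (hz : z ≠ 0) :
    ∃ n : ℤ, argIn (-z) = argIn z + π + n * (2 * π) := by
  have hangle : (argIn (-z) : Angle) = ((argIn z + π : ℝ) : Angle) := by
    rw [Angle.coe_add, coe_argIn, coe_argIn, Complex.arg_neg_coe_angle hz]
  obtain ⟨n, hn⟩ := Angle.angle_eq_iff_two_pi_dvd_sub.1 hangle
  exact ⟨n, by linear_combination hn⟩

theorem coneIdx_sub_one (u v : ℂ) :
    (coneIdx u v : ℝ) - 1 = ⌊argIn (v - u) / (π / 3)⌋ := by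
  have hfloor : 0 ≤ ⌊argIn (v - u) / (π / 3)⌋ :=
    Int.floor_nonneg.2 (div_nonneg (argIn_nonneg _) (by positivity))
  rw [coneIdx, Nat.cast_add_one, add_sub_cancel_right, ← Int.cast_natCast,
    Int.toNat_of_nonneg hfloor]

theorem argIn_mem_Ico_coneIdx (u v : ℂ) :
    argIn (v - u) ∈
      Set.Ico (((coneIdx u v : ℝ) - 1) * (π / 3)) ((coneIdx u v : ℝ) * (π / 3)) := by
  have hwidth : 0 < π / 3 := by positivity
  rw [Set.mem_Ico, ← le_div_iff₀ hwidth, ← div_lt_iff₀ hwidth, coneIdx_sub_one,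
    sub_eq_iff_eq_add.1 (coneIdx_sub_one u v)]
  exact ⟨Int.floor_le _, Int.lt_floor_add_one _⟩

theorem coe_bisAngle_swap {u v : ℂ} (huv : u ≠ v) :
    (bisAngle v u : Angle) = bisAngle u v + π := by
  obtain ⟨n, hn⟩ := exists_argIn_neg_eq (sub_ne_zero.2 huv.symm)
  rw [neg_sub] at hn
  have hshift : argIn (u - v) / (π / 3) = argIn (v - u) / (π / 3) + (3 + 6 * n : ℤ) := by
    rw [hn]
    push_cast
    field_simp
    ring
  rw [← Angle.coe_add, Angle.angle_eq_iff_two_pi_dvd_sub]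
  refine ⟨n, ?_⟩
  simp only [bisAngle, coneIdx_sub_one]
  rw [hshift, Int.floor_add_intCast]
  push_cast
  ring

theorem projDist_eq_cos_add_sin (u v : ℂ) :
    projDist u v = (v - u).re * cos (bisAngle u v) + (v - u).im * sin (bisAngle u v) := by
  rw [projDist, ← mul_neg, mul_comm Complex.I, ← Complex.ofReal_neg, Complex.mul_re,
    Complex.exp_ofReal_mul_I_re, Complex.exp_ofReal_mul_I_im, cos_neg, sin_neg, mul_neg,
    sub_neg_eq_add]

theorem projDist_comm (u v : ℂ) : projDist u v = projDist v u := by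
  rcases eq_or_ne u v with rfl | huv
  · rfl
  rw [projDist_eq_cos_add_sin, projDist_eq_cos_add_sin v u, ← Angle.cos_coe (bisAngle v u),
    ← Angle.sin_coe (bisAngle v u), coe_bisAngle_swap huv, Angle.cos_add_pi, Angle.sin_add_pi,
    Angle.cos_coe, Angle.sin_coe, Complex.sub_re, Complex.sub_im, Complex.sub_re, Complex.sub_im]
  ring

theorem sin_sub_mul_exp_I_mul (α β θ : ℝ) :
    (sin (β - α) : ℂ) * Complex.exp (Complex.I * θ) =
      sin (β - θ) * Complex.exp (Complex.I * α) + sin (θ - α) * Complex.exp (Complex.I * β) := by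
  simp only [mul_comm Complex.I, Complex.exp_mul_I, Complex.ofReal_sin, Complex.ofReal_sub,
    Complex.sin_sub]
  ring

theorem exists_nonneg_combination_exp_I_mul {α β θ r : ℝ} (hαβ : α < β) (hβα : β < α + π)
    (hθ : θ ∈ Set.Icc α β) (hr : 0 ≤ r) :
    ∃ s t : ℝ, 0 ≤ s ∧ 0 ≤ t ∧ (r : ℂ) * Complex.exp (Complex.I * θ) =
      s * Complex.exp (Complex.I * α) + t * Complex.exp (Complex.I * β) := by
  obtain ⟨hαθ, hθβ⟩ := hθ
  have hsin : 0 < sin (β - α) := sin_pos_of_pos_of_lt_pi (by linarith) (by linarith)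
  have hsinα : 0 ≤ sin (β - θ) := sin_nonneg_of_nonneg_of_le_pi (by linarith) (by linarith)
  have hsinβ : 0 ≤ sin (θ - α) := sin_nonneg_of_nonneg_of_le_pi (by linarith) (by linarith)
  refine ⟨r * sin (β - θ) / sin (β - α), r * sin (θ - α) / sin (β - α), by positivity,
    by positivity, ?_⟩
  have hsin_ne : (sin (β - α) : ℂ) ≠ 0 := Complex.ofReal_ne_zero.2 hsin.ne'
  simp only [Complex.ofReal_div, Complex.ofReal_mul]
  field_simp
  linear_combination (r : ℂ) * sin_sub_mul_exp_I_mul α β θ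

theorem mem_canonTri_of_projDist_le {a b p : ℂ} (hidx : coneIdx a p = coneIdx a b)
    (hle : projDist a p ≤ projDist a b) : p ∈ canonTri a b := by
  have hbis : bisAngle a p = bisAngle a b := by rw [bisAngle, bisAngle, hidx]
  have harg := Set.Ico_subset_Icc_self (argIn_mem_Ico_coneIdx a p)
  rw [hidx] at harg
  obtain ⟨s, t, hs, ht, hst⟩ := exists_nonneg_combination_exp_I_mul
    (by linarith [pi_pos]) (by linarith [pi_pos]) harg (norm_nonneg (p - a))
  rw [norm_mul_exp_I_mul_argIn] at hst
  exact ⟨s, t, hs, ht, by linear_combination hst, hbis ▸ hle⟩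

theorem theta_edge_with_empty_canonical_triangle_general (S : Finset ℂ) (u v : ℂ)
    (huv : ThetaEdge S u v) (hempty : ∀ w ∈ S, w ∈ canonTri v u → w = u ∨ w = v) :
    ThetaThetaEdge S u v := by
  refine ⟨huv, fun w ⟨hwS, _, hvw, _⟩ hidx => ?_⟩
  by_contra! hlt
  have hclose : projDist v w ≤ projDist v u := by
    rw [projDist_comm v w, projDist_comm v u]
    exact hlt.le
  rcases hempty w hwS (mem_canonTri_of_projDist_le hidx hclose) with rfl | rfl
  · exact hlt.false
  · exact hvw rfl

/-- If `u → v` is an edge of `Θ₆(S)` and the canonical triangle `T(v,u)`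
contains no point of `S` other than `u` and `v`, then `u → v` is an edge of `ΘΘ₆(S)`. -/
theorem theta_edge_with_empty_canonical_triangle (S : Finset ℂ) (hgen : GenPos S)
    (u v : ℂ) (huv : ThetaEdge S u v)
    (hempty : ∀ w ∈ S, w ∈ canonTri v u → w = u ∨ w = v) :
    ThetaThetaEdge S u v :=
  theta_edge_with_empty_canonical_triangle_general S u v huv hempty

end
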